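/- Let E be a row-finite directed graph. Then the following are equivalent: (1) for every x ∈ E^∞ there exists n ∈ ℕ such that every path in x(n)E^∞ that is frequently divertable to [x] is shift equivalent to x; (2) for every x ∈ E^∞ there exists n ∈ ℕ such that the only path in x(n)E^∞ that is shift equivalent to x is σ^n(x). -/

import Mathlib

/-- A directed graph: countable sets of vertices and edges, with range and source
maps. -/
structure DGraph : Type 1 where
  V : Type
  E : Type
  countableV : Countable V
  countableE : Countable E
  r : E → V
  s : E → V

namespace DGraph

/-- `E` is row-finite: every vertex receives only finitely many edges. -/
def RowFinite (G : DGraph) : Prop := ∀ v : G.V, {e : G.E | G.r e = v}.Finite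

/-- A source of `E`: a vertex receiving no edges. -/
def IsSource (G : DGraph) (v : G.V) : Prop := ∀ e : G.E, G.r e ≠ v

end DGraph

/-- A (finite or infinite) path in the directed graph `G`.  `edge i` is the
`(i+1)`-st edge of the path (or `none` beyond the end of the path); once `none`
always `none`, so a path is either a vertex (`rng`, with no edges), a finite path,
or an infinite path.  Edges are composed so that `s(edge i) = r(edge (i+1))`. -/
structure LPath (G : DGraph) where
  rng : G.V
  edge : ℕ → Option G.E
  edge_closed : ∀ i, edge i = none → edge (i + 1) = none
  rng_compat : ∀ e, edge 0 = some e → G.r e = rng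
  compat : ∀ i e f, edge i = some e → edge (i + 1) = some f → G.s e = G.r f

namespace LPath

variable {G : DGraph}

/-- The vertex `x(n)` of the path `x` (a junk value, the range, beyond the length
of the path). -/
def vert (x : LPath G) : ℕ → G.V
  | 0 => x.rng
  | n + 1 =>
    match x.edge n with
    | some e => G.s e
    | none => x.rng

/-- `x` is an infinite path, i.e. a member of `E^∞`. -/
def Infinite (x : LPath G) : Prop := ∀ i, (x.edge i).isSome

/-- `n ≤ |x|`: the first `n` edges of `x` all exist. -/
def LeLen (x : LPath G) (n : ℕ) : Prop := ∀ i, i < n → (x.edge i).isSome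

/-- `|x| = n`: `x` is a finite path of length `n`. -/
def LenEq (x : LPath G) (n : ℕ) : Prop := x.edge n = none ∧ x.LeLen n

theorem vert_eq (x : LPath G) (m : ℕ) (e : G.E) (h : x.edge m = some e) :
    G.r e = x.vert m := by
  cases m with
  | zero => exact x.rng_compat e h
  | succ n =>
    cases hn : x.edge n with
    | none => exact absurd h (by simp [x.edge_closed n hn])
    | some f =>
      have hc := x.compat n f e hn h
      simp only [vert, hn]
      exact hc.symm

/-- The shifted path `σ^m(x)` (meaningful when `m ≤ |x|`). -/
def shift (x : LPath G) (m : ℕ) : LPath G where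
  rng := x.vert m
  edge i := x.edge (m + i)
  edge_closed i h := x.edge_closed (m + i) h
  rng_compat e he := x.vert_eq m e he
  compat i e f he hf := x.compat (m + i) e f he hf

/-- `x` is shift equivalent to `y` with lag `n ∈ ℤ`: there are `p, q ∈ ℕ` with
`p - q = n`, `p ≤ |x|`, `q ≤ |y|` and `σ^p(x) = σ^q(y)`. -/
def ShiftEquivLag (x y : LPath G) (n : ℤ) : Prop :=
  ∃ p q : ℕ, (p : ℤ) - (q : ℤ) = n ∧ x.LeLen p ∧ y.LeLen q ∧ x.shift p = y.shift q

/-- `x` is shift equivalent to `y`. -/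
def ShiftEquiv (x y : LPath G) : Prop := ∃ n : ℤ, ShiftEquivLag x y n

/-- `x` belongs to `E^{≤∞}`: it is infinite, or finite with its source a source
of the graph. -/
def Boundary (x : LPath G) : Prop :=
  x.Infinite ∨ ∃ n : ℕ, x.LenEq n ∧ G.IsSource (x.vert n)

/-- `x` is frequently divertable to `[y]`: for every `n ≤ |x|` there is a path in
`x(n)E^{≤∞}` that is shift equivalent to `y`. -/
def FreqDiv (x y : LPath G) : Prop :=
  ∀ n : ℕ, x.LeLen n → ∃ z : LPath G, z.Boundary ∧ z.rng = x.vert n ∧ ShiftEquiv z y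

/-- The segment `x(m, n)` of `x` is a cycle: it is closed (`x(m) = x(n)`) and the
sources `x(i)`, `m < i ≤ n`, of its edges are pairwise distinct. -/
def HasCycleAt (x : LPath G) (m n : ℕ) : Prop :=
  m < n ∧ x.LeLen n ∧ x.vert m = x.vert n ∧
    ∀ i j, m < i → i ≤ n → m < j → j ≤ n → x.vert i = x.vert j → i = j

/-- `x` contains a cycle. -/
def ContainsCycle (x : LPath G) : Prop := ∃ m n, x.HasCycleAt m n

end LPath

/-- A cycle in `G`: a finite path `α = α_1 ⋯ α_len` (here 0-indexed, and with junk
values of `edge` beyond `len`) of non-zero length with `r(α) = s(α)` and whose edges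
have pairwise distinct sources. -/
structure DCycle (G : DGraph) where
  len : ℕ
  len_pos : 0 < len
  edge : ℕ → G.E
  compat : ∀ i, i + 1 < len → G.s (edge i) = G.r (edge (i + 1))
  closed : G.s (edge (len - 1)) = G.r (edge 0)
  distinct : ∀ i j, i < len → j < len → G.s (edge i) = G.s (edge j) → i = j

namespace DCycle

variable {G : DGraph}

/-- `f` is an entry to the cycle `c`: `r(f) = r(c_i)` and `f ≠ c_i` for some `i`. -/
def IsEntry (c : DCycle G) (f : G.E) : Prop :=
  ∃ i, i < c.len ∧ G.r f = G.r (c.edge i) ∧ f ≠ c.edge i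

/-- The edge `f` lies in the cycle `c`. -/
def EdgeMem (c : DCycle G) (f : G.E) : Prop := ∃ i, i < c.len ∧ c.edge i = f

end DCycle


namespace LPath

variable {G : DGraph}

theorem ext' {a b : LPath G} (h0 : a.rng = b.rng) (h : ∀ i, a.edge i = b.edge i) : a = b := by
  cases a; cases b
  have := funext h
  simp only at h0 this
  subst h0; subst this; rfl

theorem vert_congr {a b : LPath G} (n : ℕ) (h0 : a.rng = b.rng)
    (h : ∀ i, i < n → a.edge i = b.edge i) : a.vert n = b.vert n := by
  cases n with
  | zero => exact h0
  | succ k => simp only [vert, h k (Nat.lt_succ_self k), h0]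

theorem shift_vert {x : LPath G} (hx : x.Infinite) (m j : ℕ) :
    (x.shift m).vert j = x.vert (m + j) := by
  cases j with
  | zero => rfl
  | succ k =>
    obtain ⟨e, he⟩ := Option.isSome_iff_exists.1 (hx (m + k))
    have h1 : (x.shift m).edge k = some e := he
    change _ = x.vert ((m + k) + 1)
    simp only [vert, h1, he]

theorem shift_inf {x : LPath G} (hx : x.Infinite) (m : ℕ) : (x.shift m).Infinite :=
  fun i => hx (m + i)

theorem shift_shift {x : LPath G} (hx : x.Infinite) (a b : ℕ) :
    (x.shift a).shift b = x.shift (a + b) := by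
  apply ext'
  · exact shift_vert hx a b
  · intro i
    change x.edge (a + (b + i)) = x.edge (a + b + i)
    rw [Nat.add_assoc]

theorem shift_zero (x : LPath G) : x.shift 0 = x := by
  apply ext'
  · rfl
  · intro i
    change x.edge (0 + i) = x.edge i
    rw [Nat.zero_add]

theorem equiv_intro {x y : LPath G} (hx : x.Infinite) (hy : y.Infinite) (p q : ℕ)
    (h : x.shift p = y.shift q) : ShiftEquiv x y :=
  ⟨_, p, q, rfl, fun i _ => hx i, fun i _ => hy i, h⟩

theorem equiv_elim {x y : LPath G} (h : ShiftEquiv x y) : ∃ p q, x.shift p = y.shift q := by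
  obtain ⟨_, p, q, _, _, _, h⟩ := h
  exact ⟨p, q, h⟩

theorem equiv_inf {z x : LPath G} (hx : x.Infinite) (h : ShiftEquiv z x) : z.Infinite := by
  obtain ⟨_, p, q, _, hz, _, h⟩ := h
  intro i
  by_cases hi : i < p
  · exact hz i hi
  · have : (z.shift p).edge (i - p) = (x.shift q).edge (i - p) := by rw [h]
    change z.edge (p + (i - p)) = x.edge _ at this
    rw [show p + (i - p) = i by omega] at this
    rw [this]
    exact hx _

theorem equiv_shift {P x : LPath G} (hP : P.Infinite) (hx : x.Infinite) (h : ShiftEquiv P x)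
    (j : ℕ) : ShiftEquiv (P.shift j) x := by
  obtain ⟨p, q, h⟩ := equiv_elim h
  refine equiv_intro (shift_inf hP j) hx p (q + j) ?_
  rw [shift_shift hP, Nat.add_comm, ← shift_shift hP, h, shift_shift hx]

/-- The first `p` edges of `P` followed by `y`. -/
def splice (P : LPath G) (hP : P.Infinite) (p : ℕ) (y : LPath G) (h : y.rng = P.vert p) :
    LPath G where
  rng := P.rng
  edge i := if i < p then P.edge i else y.edge (i - p)
  edge_closed i hi := by
    by_cases h1 : i < p
    · have := hP i
      simp [h1] at hi
      simp [hi] at this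
    · simp only [h1, if_false] at hi
      rw [if_neg (by omega), show i + 1 - p = i - p + 1 by omega]
      exact y.edge_closed _ hi
  rng_compat e he := by
    by_cases h1 : 0 < p
    · simp only [h1, if_true] at he
      exact P.rng_compat e he
    · obtain rfl : p = 0 := by omega
      simp at he
      rw [y.rng_compat e he, h]; rfl
  compat i e f he hf := by
    by_cases h1 : i + 1 < p
    · rw [if_pos (by omega)] at he
      rw [if_pos h1] at hf
      exact P.compat i e f he hf
    · rw [if_neg h1] at hf
      by_cases h2 : i < p
      · obtain rfl : p = i + 1 := by omega
        rw [if_pos h2] at he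
        simp at hf
        rw [y.rng_compat f hf, h]
        simp only [vert, he]
      · rw [if_neg h2] at he
        rw [show i + 1 - p = i - p + 1 by omega] at hf
        exact y.compat _ e f he hf

theorem splice_edge_lt {P : LPath G} (hP : P.Infinite) (p : ℕ) (y : LPath G)
    (h : y.rng = P.vert p) (i : ℕ) (hi : i < p) : (splice P hP p y h).edge i = P.edge i :=
  if_pos hi

theorem splice_inf {P : LPath G} (hP : P.Infinite) (p : ℕ) (y : LPath G)
    (h : y.rng = P.vert p) (hy : y.Infinite) : (splice P hP p y h).Infinite := by
  intro i
  by_cases hi : i < p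
  · rw [splice_edge_lt hP p y h i hi]; exact hP i
  · have : (splice P hP p y h).edge i = y.edge (i - p) := if_neg hi
    rw [this]; exact hy _

theorem splice_shift {P : LPath G} (hP : P.Infinite) (p : ℕ) (y : LPath G)
    (h : y.rng = P.vert p) : (splice P hP p y h).shift p = y := by
  apply ext'
  · rw [h]
    exact vert_congr p rfl (fun i hi => splice_edge_lt hP p y h i hi)
  · intro i
    have : ((splice P hP p y h).shift p).edge i = y.edge (p + i - p) := if_neg (by omega)
    rw [this, Nat.add_sub_cancel_left]

theorem splice_equiv {P : LPath G} (hP : P.Infinite) (p : ℕ) (y : LPath G)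
    (h : y.rng = P.vert p) (hy : y.Infinite) {x : LPath G} (hx : x.Infinite)
    (hyx : ShiftEquiv y x) : ShiftEquiv (splice P hP p y h) x := by
  obtain ⟨a, b, hab⟩ := equiv_elim hyx
  refine equiv_intro (splice_inf hP p y h hy) hx (p + a) b ?_
  rw [← shift_shift (splice_inf hP p y h hy), splice_shift, hab]

theorem countable_class (x : LPath G) : {w : LPath G | ShiftEquiv w x}.Countable := by
  have hV := G.countableV
  have hE := G.countableE
  have hsub : {w : LPath G | ShiftEquiv w x} ⊆
      ⋃ p : ℕ, ⋃ q : ℕ, {w : LPath G | w.shift p = x.shift q} := by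
    intro w hw
    obtain ⟨p, q, h⟩ := equiv_elim hw
    simp only [Set.mem_iUnion]
    exact ⟨p, q, h⟩
  refine Set.Countable.mono hsub ?_
  refine Set.countable_iUnion fun p => Set.countable_iUnion fun q => ?_
  refine Set.countable_of_injective_of_countable_image
    (f := fun w : LPath G => (w.rng, fun i : Fin p => w.edge i)) ?_ (Set.to_countable _)
  intro a ha b hb hab
  simp only [Prod.mk.injEq] at hab
  have hs : a.shift p = b.shift p := by
    have h1 : a.shift p = x.shift q := ha
    have h2 : b.shift p = x.shift q := hb
    rw [h1, h2]
  apply ext' hab.1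
  intro i
  by_cases hi : i < p
  · exact congrFun hab.2 ⟨i, hi⟩
  · have : (a.shift p).edge (i - p) = (b.shift p).edge (i - p) := by rw [hs]
    change a.edge (p + (i - p)) = b.edge (p + (i - p)) at this
    rwa [show p + (i - p) = i by omega] at this

theorem exists_ne {x : LPath G} (hx : x.Infinite)
    (H : ∀ n, ∃ y : LPath G, y.Infinite ∧ y.rng = x.vert n ∧ ShiftEquiv y x ∧ y ≠ x.shift n)
    (P : LPath G) (hP : P.Infinite) (hPx : ShiftEquiv P x) (l : ℕ) (w : LPath G) :
    ∃ P' : LPath G, P'.Infinite ∧ ShiftEquiv P' x ∧ P'.rng = P.rng ∧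
      (∀ i, i < l → P'.edge i = P.edge i) ∧ P' ≠ w := by
  by_cases hw : P = w
  · subst hw
    obtain ⟨p, q, h⟩ := equiv_elim hPx
    have h' : P.shift (p + l) = x.shift (q + l) := by
      rw [← shift_shift hP, h, shift_shift hx]
    obtain ⟨y, hy, hyr, hyx, hne⟩ := H (q + l)
    have hr : y.rng = P.vert (p + l) := by
      rw [hyr]
      exact (congrArg LPath.rng h').symm
    refine ⟨splice P hP (p + l) y hr, splice_inf hP _ y hr hy,
      splice_equiv hP _ y hr hy hx hyx, rfl,
      fun i hi => splice_edge_lt hP _ y hr i (by omega), ?_⟩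
    intro heq
    apply hne
    rw [← h', ← splice_shift hP (p + l) y hr, heq]
  · exact ⟨P, hP, hPx, rfl, fun _ _ => rfl, hw⟩

theorem step {x : LPath G} (hx : x.Infinite)
    (H : ∀ n, ∃ y : LPath G, y.Infinite ∧ y.rng = x.vert n ∧ ShiftEquiv y x ∧ y ≠ x.shift n)
    (w : LPath G) (S : {P : LPath G // P.Infinite ∧ ShiftEquiv P x} × ℕ) :
    ∃ S' : {P : LPath G // P.Infinite ∧ ShiftEquiv P x} × ℕ,
      S.2 < S'.2 ∧ S'.1.1.rng = S.1.1.rng ∧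
      (∀ i, i < S.2 → S'.1.1.edge i = S.1.1.edge i) ∧
      (w.rng = S.1.1.rng → ∃ i, i < S'.2 ∧ S'.1.1.edge i ≠ w.edge i) := by
  obtain ⟨⟨P, hP, hPx⟩, l⟩ := S
  obtain ⟨P', h1, h2, h3, h4, h5⟩ := exists_ne hx H P hP hPx l w
  by_cases hw : w.rng = P.rng
  · have : ∃ i, P'.edge i ≠ w.edge i := by
      by_contra! hc
      exact h5 (ext' (h3.trans hw.symm) hc)
    obtain ⟨i, hi⟩ := this
    exact ⟨(⟨P', h1, h2⟩, l + i + 1), by grind, h3, h4,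
      fun _ => ⟨i, by grind, hi⟩⟩
  · exact ⟨(⟨P', h1, h2⟩, l + 1), by simp, h3, h4, fun h => absurd h hw⟩

theorem main_dir {x : LPath G} (hx : x.Infinite)
    (H : ∀ n, ∃ y : LPath G, y.Infinite ∧ y.rng = x.vert n ∧ ShiftEquiv y x ∧ y ≠ x.shift n)
    (n : ℕ) : ∃ y : LPath G, y.Infinite ∧ y.rng = x.vert n ∧ FreqDiv y x ∧
      ¬ ShiftEquiv y x := by
  obtain ⟨w, hw⟩ := (countable_class x).exists_eq_range
    ⟨x, equiv_intro hx hx 0 0 rfl⟩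
  choose nxt hlt hrng hag hdiff using step hx H
  let S : ℕ → {P : LPath G // P.Infinite ∧ ShiftEquiv P x} × ℕ := fun k =>
    Nat.rec (⟨x.shift n, shift_inf hx n, equiv_intro (shift_inf hx n) hx 0 n (shift_zero _)⟩, 0)
      (fun k s => nxt (w k) s) k
  have hS : ∀ k, S (k + 1) = nxt (w k) (S k) := fun k => rfl
  have hr : ∀ k, (S k).1.1.rng = x.vert n := by
    intro k
    induction k with
    | zero => rfl
    | succ k ih => rw [hS, hrng, ih]
  have hmono : StrictMono (fun k => (S k).2) := strictMono_nat_of_lt_succ fun k => by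
    simp only [hS]; exact hlt _ _
  have hle : ∀ k, k ≤ (S k).2 := fun k => hmono.id_le k
  have hagree : ∀ k j i, k ≤ j → i < (S k).2 → (S j).1.1.edge i = (S k).1.1.edge i := by
    intro k j i hkj hi
    induction j, hkj using Nat.le_induction with
    | base => rfl
    | succ j hkj ih =>
      rw [hS, hag _ _ i (lt_of_lt_of_le hi (hmono.monotone hkj)), ih]
  have hag2 : ∀ k i, i < (S k).2 → (S (i + 1)).1.1.edge i = (S k).1.1.edge i := by
    intro k i hi
    rcases le_total k (i + 1) with h | h
    · exact hagree k (i + 1) i h hi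
    · exact (hagree (i + 1) k i h (hle (i + 1))).symm
  let y : LPath G :=
    { rng := x.vert n
      edge := fun i => (S (i + 1)).1.1.edge i
      edge_closed := by
        intro i hi
        have := (S (i + 1)).1.2.1 i
        rw [hi] at this
        simp at this
      rng_compat := by
        intro e he
        rw [(S 1).1.1.rng_compat e he, hr]
      compat := by
        intro i e f he hf

        rw [hag2 (i + 1 + 1) i (by have := hle (i + 1 + 1); omega)] at he
        exact (S (i + 1 + 1)).1.1.compat i e f he hf }
  have hy : y.Infinite := fun i => (S (i + 1)).1.2.1 i
  refine ⟨y, hy, rfl, ?_, ?_⟩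
  · intro j _
    refine ⟨(S j).1.1.shift j, Or.inl (shift_inf (S j).1.2.1 j), ?_,
      equiv_shift (S j).1.2.1 hx (S j).1.2.2 j⟩
    exact vert_congr j (hr j) fun i hi => (hag2 j i (lt_of_lt_of_le hi (hle j))).symm
  · intro hyx
    have : y ∈ Set.range w := by rw [← hw]; exact hyx
    obtain ⟨k, hk⟩ := this
    obtain ⟨i, hi, hne⟩ := hdiff (w k) (S k) (by rw [hk, hr])
    rw [← hS] at hi hne
    apply hne
    rw [hk]
    exact (hag2 (k + 1) i hi).symm

end LPath

/-- For a row-finite directed graph `E`, the following are equivalent: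
(1) for every `x ∈ E^∞` there is `n ∈ ℕ` such that every path in `x(n)E^∞` that is
frequently divertable to `[x]` is shift equivalent to `x`;
(2) for every `x ∈ E^∞` there is `n ∈ ℕ` such that the only path in `x(n)E^∞` that is
shift equivalent to `x` is `σ^n(x)`. -/
theorem stmt14 (G : DGraph) (hrf : G.RowFinite) :
    (∀ x : LPath G, x.Infinite → ∃ n : ℕ, ∀ y : LPath G, y.Infinite →
      y.rng = x.vert n → LPath.FreqDiv y x → LPath.ShiftEquiv y x) ↔
    (∀ x : LPath G, x.Infinite → ∃ n : ℕ, ∀ y : LPath G, y.Infinite →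
      y.rng = x.vert n → LPath.ShiftEquiv y x → y = x.shift n) := by
  constructor
  · intro h1 x hx
    by_contra! hc
    obtain ⟨n, hn⟩ := h1 x hx
    obtain ⟨y, hy, hyr, hf, hne⟩ := LPath.main_dir hx hc n
    exact hne (hn y hy hyr hf)
  · intro h2 x hx
    obtain ⟨n, hn⟩ := h2 x hx
    refine ⟨n, fun y hy hyr hf => ?_⟩
    refine LPath.equiv_intro hy hx 0 n ?_
    rw [LPath.shift_zero]
    refine LPath.ext' hyr fun i => ?_
    obtain ⟨z, _, hzr, hzx⟩ := hf (i + 1) (fun j _ => hy j)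
    have hz := LPath.equiv_inf hx hzx
    have := hn (LPath.splice y hy (i + 1) z hzr) (LPath.splice_inf hy _ z hzr hz) hyr
      (LPath.splice_equiv hy _ z hzr hz hx hzx)
    rw [← this, LPath.splice_edge_lt hy _ z hzr i (Nat.lt_succ_self i)]
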